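/- arXiv:1901.10944 — 9 statements merged into one kernel-verified Lean document; each statement's English description precedes it below -/
import Mathlib

section
/- Let A = (a, b; c, d) be a 2×2 real matrix with strictly positive entries and let R ≥ 1 satisfy 1/R ≤ a/c ≤ R and 1/R ≤ b/d ≤ R. Then for every z ∈ D one has |φ_A(z) − 1/2| ≤ R/(R+1) − 1/2; equivalently |2φ_A(z) − 1| ≤ (R−1)/(R+1). In particular φ_A maps D into D. -/
open Complex

/-- The complex Möbius map `φ_A(z) = ((a−b)z + b)/((a+c−b−d)z + b + d)`. -/
noncomputable def phiC (a b c d : ℝ) (z : ℂ) : ℂ :=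
  (((a : ℂ) - b) * z + b) / (((a : ℂ) + c - b - d) * z + b + d)

theorem stmt3 (a b c d R : ℝ) (ha : 0 < a) (hb : 0 < b) (hc : 0 < c) (hd : 0 < d)
    (hR : 1 ≤ R) (h1 : 1 / R ≤ a / c) (h2 : a / c ≤ R) (h3 : 1 / R ≤ b / d) (h4 : b / d ≤ R) :
    ∀ z ∈ Metric.ball ((1 : ℂ) / 2) (1 / 2),
      ‖phiC a b c d z - 1 / 2‖ ≤ R / (R + 1) - 1 / 2 ∧
      ‖2 * phiC a b c d z - 1‖ ≤ (R - 1) / (R + 1) ∧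
      phiC a b c d z ∈ Metric.ball ((1 : ℂ) / 2) (1 / 2) := by
  intro z hz
  have hR0 : 0 < R := by linarith
  rw [div_le_div_iff₀ hR0 hc] at h1
  rw [div_le_div_iff₀ hR0 hd] at h3
  rw [div_le_iff₀ hc] at h2
  rw [div_le_iff₀ hd] at h4
  obtain ⟨x, y⟩ := z
  have hxy : x ^ 2 + y ^ 2 < x := by
    rw [Metric.mem_ball, dist_eq_norm] at hz
    have h := mul_self_lt_mul_self (norm_nonneg _) hz
    rw [← sq, ← Complex.normSq_eq_norm_sq, Complex.normSq_apply] at h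
    norm_num at h
    nlinarith [h]
  have hx0 : 0 < x := by nlinarith [sq_nonneg x, sq_nonneg y]
  have hx1 : x < 1 := by nlinarith [sq_nonneg y]
  set z : ℂ := ⟨x, y⟩ with hzdef
  set W : ℂ := ((a : ℂ) + c - b - d) * z + b + d with hW
  set V : ℂ := ((a : ℂ) - c - b + d) * z + b - d with hV
  have hWre : W.re = (a + c - b - d) * x + b + d := by simp [hW, hzdef]
  have hWim : W.im = (a + c - b - d) * y := by simp [hW, hzdef]
  have hVre : V.re = (a - c - b + d) * x + b - d := by simp [hV, hzdef]
  have hVim : V.im = (a - c - b + d) * y := by simp [hV, hzdef]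
  have hW0 : W ≠ 0 := by
    intro h
    have h' : W.re = 0 := by rw [h]; rfl
    rw [hWre] at h'
    have e1 : 0 < (a + c) * x := by positivity
    have e2 : 0 < (b + d) * (1 - x) := mul_pos (by linarith) (by linarith)
    nlinarith
  have hphi : 2 * phiC a b c d z - 1 = V / W := by
    unfold phiC
    rw [← hW, eq_div_iff hW0, sub_mul, mul_div_assoc', div_mul_cancel₀ _ hW0, hW, hV]
    ring
  have hmain : ‖V‖ * (R + 1) ≤ (R - 1) * ‖W‖ := by
    refine (pow_le_pow_iff_left₀ (mul_nonneg (norm_nonneg _) (by linarith)) (mul_nonneg (by linarith) (norm_nonneg _)) two_ne_zero).mp ?_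
    · rw [mul_pow, mul_pow, ← Complex.normSq_eq_norm_sq, ← Complex.normSq_eq_norm_sq,
        Complex.normSq_apply, Complex.normSq_apply, hWre, hWim, hVre, hVim]
      have hp : 0 ≤ R * c - a := by linarith
      have hq : 0 ≤ R * d - b := by linarith
      have hr : 0 ≤ R * a - c := by linarith
      have hs : 0 ≤ R * b - d := by linarith
      have k1 : 0 ≤ (R * c - a) * (R * a - c) * (x ^ 2 + y ^ 2) := by positivity
      have k2 : 0 ≤ (R * d - b) * (R * b - d) * ((1 - x) ^ 2 + y ^ 2) := by positivity
      have k3 : 0 ≤ ((R * c - a) * (R * b - d) + (R * d - b) * (R * a - c))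
          * (x - (x ^ 2 + y ^ 2)) := mul_nonneg (by positivity) (by linarith)
      linarith
  have h2' : ‖2 * phiC a b c d z - 1‖ ≤ (R - 1) / (R + 1) := by
    rw [hphi, norm_div, div_le_div_iff₀ (norm_pos_iff.mpr hW0) (by linarith)]
    exact hmain
  have e : ‖phiC a b c d z - 1 / 2‖ = ‖2 * phiC a b c d z - 1‖ / 2 := by
    rw [show phiC a b c d z - 1 / 2 = (2 * phiC a b c d z - 1) / 2 by ring, norm_div]
    norm_num
  have e2 : R / (R + 1) - 1 / 2 = (R - 1) / (R + 1) / 2 := by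
    field_simp
    ring
  have e3 : (R - 1) / (R + 1) < 1 := by
    rw [div_lt_one (by linarith)]
    linarith
  refine ⟨by rw [e, e2]; linarith, h2', ?_⟩
  rw [Metric.mem_ball, dist_eq_norm, e]
  linarith
end

section
/- Let A be an invertible 2×2 real matrix with strictly positive entries. Then φ_A has exactly one fixed point z_A in D (i.e. there is a unique z ∈ D with φ_A(z) = z), and this fixed point is real with 0 < z_A < 1. -/
open Complex

theorem ball_re_aux (z : ℂ) (hz : z ∈ Metric.ball ((1 : ℂ) / 2) (1 / 2)) :
    0 < z.re ∧ z.re < 1 := by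
  rw [Metric.mem_ball, dist_eq_norm] at hz
  have h := (Complex.abs_re_le_norm (z - 1 / 2)).trans_lt hz
  have e : (z - 1 / 2).re = z.re - 1 / 2 := by simp
  rw [e, abs_lt] at h
  constructor <;> linarith [h.1, h.2]

theorem fix_iff_aux (a b c d : ℝ) (ha : 0 < a) (hb : 0 < b) (hc : 0 < c) (hd : 0 < d)
    (z : ℂ) (h0 : 0 < z.re) (h1 : z.re < 1) :
    phiC a b c d z = z ↔
      ((a : ℂ) + c - b - d) * z ^ 2 + (2 * b + d - a) * z - b = 0 := by
  have hw : ((a : ℂ) + c - b - d) * z + b + d ≠ 0 := by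
    intro h
    have := congrArg Complex.re h
    simp at this
    nlinarith [mul_pos (add_pos ha hc) h0, mul_pos (add_pos hb hd) (sub_pos.2 h1)]
  unfold phiC
  rw [div_eq_iff hw]
  constructor <;> intro h <;> linear_combination -h

theorem stmt4 (a b c d : ℝ) (ha : 0 < a) (hb : 0 < b) (hc : 0 < c) (hd : 0 < d)
    (hdet : a * d - b * c ≠ 0) :
    ∃ z : ℂ, z ∈ Metric.ball ((1 : ℂ) / 2) (1 / 2) ∧ phiC a b c d z = z ∧
      z.im = 0 ∧ 0 < z.re ∧ z.re < 1 ∧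
      ∀ z' ∈ Metric.ball ((1 : ℂ) / 2) (1 / 2), phiC a b c d z' = z' → z' = z := by
  obtain ⟨x, ⟨hx0, hx1⟩, hx⟩ : ∃ x ∈ Set.Ioo (0 : ℝ) 1,
      (a + c - b - d) * x ^ 2 + (2 * b + d - a) * x - b = 0 := by
    have := intermediate_value_Ioo (zero_le_one' ℝ)
      (f := fun x : ℝ => (a + c - b - d) * x ^ 2 + (2 * b + d - a) * x - b)
      (by fun_prop)
    exact this ⟨by simpa using hb, by ring_nf; simpa using hc⟩
  have hxC : ((a : ℂ) + c - b - d) * (x : ℂ) ^ 2 + (2 * b + d - a) * x - b = 0 := by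
    exact_mod_cast hx
  refine ⟨x, ?_, (fix_iff_aux a b c d ha hb hc hd x hx0 hx1).2 hxC, by simp, hx0, hx1, ?_⟩
  · rw [Metric.mem_ball, dist_eq_norm]
    have e : (x : ℂ) - 1 / 2 = ((x - 1 / 2 : ℝ) : ℂ) := by push_cast; rfl
    rw [e, Complex.norm_real, Real.norm_eq_abs, abs_lt]
    constructor <;> linarith
  · intro z hz hfix
    obtain ⟨h0, h1⟩ := ball_re_aux z hz
    have hq := (fix_iff_aux a b c d ha hb hc hd z h0 h1).1 hfix
    by_contra hne
    have hs : ((a : ℂ) + c - b - d) * (z + x) + (2 * b + d - a) = 0 := by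
      apply mul_left_cancel₀ (sub_ne_zero.2 hne)
      linear_combination hq - hxC
    have hre := congrArg Complex.re hs
    simp at hre
    generalize z.re = y at *
    generalize hk : a + c - b - d = k at *
    have e1 : k * (x * y) = -b := by linear_combination x * hre - hx
    have e2 : k * ((1 - x) * (1 - y)) = c := by
      linear_combination e1 - hre + hk * (-1)
    have p1 := mul_pos hx0 h0
    have p2 := mul_pos (sub_pos.2 hx1) (sub_pos.2 h1)
    have k1 : 0 < k := by
      by_contra h
      nlinarith
    nlinarith
end

section
/- Let A = (a, b; c, d) be a 2×2 real matrix with strictly positive entries. Then for every z ∈ D, the principal argument of w_A(z) satisfies |Arg(w_A(z))| ≤ arcsin( |a+c−b−d| / (a+b+c+d) ). -/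
open Complex

/-- The complex affine map `w_A(z) = (a+c−b−d)z + b + d`. -/
noncomputable def wC (a b c d : ℝ) (z : ℂ) : ℂ :=
  ((a : ℂ) + c - b - d) * z + b + d

theorem stmt7 (a b c d : ℝ) (ha : 0 < a) (hb : 0 < b) (hc : 0 < c) (hd : 0 < d) :
    ∀ z ∈ Metric.ball ((1 : ℂ) / 2) (1 / 2),
      |Complex.arg (wC a b c d z)| ≤
        Real.arcsin (|a + c - b - d| / (a + b + c + d)) := by
  intro z hz
  have hz2 : (z.re - 1/2)^2 + z.im^2 < 1/4 := by
    rw [Metric.mem_ball, Complex.dist_eq] at hz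
    have h1 : ‖z - 1/2‖^2 < (1/2)^2 := by
      have := norm_nonneg (z - 1/2)
      nlinarith
    rw [← Complex.normSq_eq_norm_sq, Complex.normSq_apply] at h1
    norm_num at h1
    nlinarith
  have hre : (wC a b c d z).re = (a + c - b - d) * z.re + b + d := by
    simp [wC]
  have him : (wC a b c d z).im = (a + c - b - d) * z.im := by
    simp [wC]
  generalize wC a b c d z = w at hre him
  have hx0 : 0 < z.re := by nlinarith [sq_nonneg z.im]
  have hx1 : z.re < 1 := by nlinarith [sq_nonneg z.im]
  have hpos : 0 < w.re := by
    rw [hre]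
    nlinarith [mul_pos (add_pos ha hc) hx0, mul_pos (add_pos hb hd) (sub_pos.2 hx1)]
  have hw : 0 < ‖w‖ := norm_pos_iff.2 (fun h => by simp [h] at hpos)
  have hS : 0 < a + b + c + d := by positivity
  have key : |w.im| / ‖w‖ ≤ |a + c - b - d| / (a + b + c + d) := by
    rw [div_le_div_iff₀ hw hS]
    apply abs_le_of_sq_le_sq' _ (by positivity) |>.2
    rw [mul_pow, mul_pow, sq_abs, sq_abs, ← Complex.normSq_eq_norm_sq, Complex.normSq_apply]
    obtain ⟨k, hk⟩ : ∃ k, k = a + c - b - d := ⟨_, rfl⟩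
    obtain ⟨S, hSd⟩ : ∃ S, S = a + b + c + d := ⟨_, rfl⟩
    have hX : w.re = k * (z.re - 1/2) + S / 2 := by rw [hre, hk, hSd]; ring
    rw [← hk] at him ⊢
    rw [← hSd]
    have hSk : 0 ≤ S^2 - k^2 := by
      have : S^2 - k^2 = 4 * (a + c) * (b + d) := by rw [hk, hSd]; ring
      rw [this]; positivity
    have hY : w.im^2 ≤ k^2/4 - (w.re - S/2)^2 := by
      rw [him, hX]
      nlinarith [mul_le_mul_of_nonneg_left hz2.le (sq_nonneg k)]
    nlinarith [mul_le_mul_of_nonneg_right hY hSk, sq_nonneg (S * w.re - (S^2 - k^2)/2)]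
  rw [Complex.arg_of_re_nonneg hpos.le, abs_le]
  have h1 : |w.im / ‖w‖| ≤ |a + c - b - d| / (a + b + c + d) := by
    rwa [abs_div, abs_of_pos hw]
  rw [abs_le] at h1
  refine ⟨?_, Real.monotone_arcsin h1.2⟩
  rw [← Real.arcsin_neg]
  exact Real.monotone_arcsin h1.1
end

section
/- Let A = (a, b; c, d) be a 2×2 real matrix with strictly positive entries, set C = max{a+c, b+d, 1/(a+c), 1/(b+d)} and θ = arcsin( |a+c−b−d| / (a+b+c+d) ). Then for every z ∈ D and every t ∈ ℂ, |w_A(z)^t| ≤ exp( |t| · √((log C)² + θ²) ), where w^t = exp(t · Log w) is the complex power defined via the principal branch of the logarithm. -/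
open Complex

theorem stmt8 (a b c d : ℝ) (ha : 0 < a) (hb : 0 < b) (hc : 0 < c) (hd : 0 < d)
    (C θ : ℝ)
    (hC : C = max (max (a + c) (b + d)) (max (1 / (a + c)) (1 / (b + d))))
    (hθ : θ = Real.arcsin (|a + c - b - d| / (a + b + c + d))) :
    ∀ z ∈ Metric.ball ((1 : ℂ) / 2) (1 / 2), ∀ t : ℂ,
      ‖wC a b c d z ^ t‖ ≤
        Real.exp (‖t‖ * Real.sqrt ((Real.log C) ^ 2 + θ ^ 2)) := by
  intro z hz t
  set p := a + c with hp
  set q := b + d with hq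
  have hp0 : 0 < p := by positivity
  have hq0 : 0 < q := by positivity
  set w := wC a b c d z with hw
  have hwm : w - (((p + q) / 2 : ℝ) : ℂ) = ((p - q : ℝ) : ℂ) * (z - 1 / 2) := by
    rw [hw, wC, hp, hq]; push_cast; ring
  have hdist : ‖w - (((p + q) / 2 : ℝ) : ℂ)‖ ≤ |p - q| / 2 := by
    rw [hwm, norm_mul, Complex.norm_real, Real.norm_eq_abs]
    rw [Metric.mem_ball, dist_eq_norm] at hz
    nlinarith [abs_nonneg (p - q)]
  set m := (p + q) / 2 with hm
  set r := |p - q| / 2 with hr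
  have hm0 : 0 < m := by positivity
  have hr0 : 0 ≤ r := by positivity
  have hmr1 : m + r ≤ max p q := by
    rw [hm, hr]
    rcases abs_cases (p - q) with h | h
    · exact le_trans (by linarith) (le_max_left p q)
    · exact le_trans (by linarith) (le_max_right p q)
  have hmr2 : min p q ≤ m - r := by
    rw [hm, hr]
    rcases abs_cases (p - q) with h | h
    · exact le_trans (min_le_right p q) (by linarith)
    · exact le_trans (min_le_left p q) (by linarith)
  have hmin0 : 0 < min p q := lt_min hp0 hq0
  have hnm : ‖(m : ℂ)‖ = m := by
    rw [Complex.norm_real, Real.norm_eq_abs, abs_of_pos hm0]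
  have hup : ‖w‖ ≤ m + r := by
    have := norm_sub_norm_le w (m : ℂ)
    linarith
  have hlo : m - r ≤ ‖w‖ := by
    have := norm_sub_norm_le (m : ℂ) w
    rw [norm_sub_rev] at this
    linarith
  have hw0 : 0 < ‖w‖ := by linarith
  have hre : 0 ≤ w.re := by
    have h1 := Complex.abs_re_le_norm (w - (m : ℂ))
    have h2 := neg_abs_le (w - (m : ℂ)).re
    simp only [Complex.sub_re, Complex.ofReal_re] at h1 h2
    linarith
  have hxy : (w.re - m) ^ 2 + w.im ^ 2 ≤ r ^ 2 := by
    have h1 : ‖w - (m : ℂ)‖ ^ 2 ≤ r ^ 2 := by gcongr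
    rw [← Complex.normSq_eq_norm_sq, Complex.normSq_apply] at h1
    simp only [Complex.sub_re, Complex.ofReal_re, Complex.sub_im, Complex.ofReal_im] at h1
    linarith
  have hns : ‖w‖ ^ 2 = w.re ^ 2 + w.im ^ 2 := by
    rw [← Complex.normSq_eq_norm_sq, Complex.normSq_apply]; ring
  have hsin : |w.im / ‖w‖| ≤ r / m := by
    rw [abs_div, abs_of_pos hw0, div_le_div_iff₀ hw0 hm0]
    refine (sq_le_sq₀ (by positivity) (by positivity)).1 ?_
    rw [mul_pow, mul_pow, sq_abs, hns]
    have hd0 : 0 ≤ m ^ 2 - r ^ 2 := by nlinarith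
    nlinarith [mul_le_mul_of_nonneg_left hxy hd0, sq_nonneg (m * w.re - (m ^ 2 - r ^ 2))]
  have hθ' : θ = Real.arcsin (r / m) := by
    rw [hθ, hr, hm, div_div_div_cancel_right₀ two_ne_zero]
    congr 2
    · congr 1
      rw [hp, hq]; ring
    · rw [hp, hq]; ring
  have harg : |w.arg| ≤ θ := by
    rw [Complex.arg_of_re_nonneg hre, hθ']
    obtain ⟨h1, h2⟩ := abs_le.1 hsin
    refine abs_le.2 ⟨?_, Real.arcsin_le_arcsin h2⟩
    rw [← Real.arcsin_neg]
    exact Real.arcsin_le_arcsin h1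
  have hlog : |Real.log ‖w‖| ≤ Real.log C := by
    have hC1 : max p q ≤ C := hC ▸ le_max_left _ _
    have hC0 : 0 < C := by linarith
    have hC2 : 1 / min p q ≤ C := by
      rcases min_choice p q with h | h
      · rw [h, hC]; exact le_max_of_le_right (le_max_left _ _)
      · rw [h, hC]; exact le_max_of_le_right (le_max_right _ _)
    refine abs_le.2 ⟨?_, Real.log_le_log hw0 (by linarith)⟩
    have h3 := Real.log_le_log (by positivity) hC2
    rw [one_div, Real.log_inv] at h3
    have h4 := Real.log_le_log hmin0 (hmr2.trans hlo)
    linarith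
  have hL : ‖Complex.log w‖ ≤ Real.sqrt ((Real.log C) ^ 2 + θ ^ 2) := by
    apply Real.le_sqrt_of_sq_le
    rw [← Complex.normSq_eq_norm_sq, Complex.normSq_apply, Complex.log_re, Complex.log_im]
    have h1 := sq_le_sq' (by linarith [abs_nonneg (Real.log ‖w‖)]) hlog
    have h2 := sq_le_sq' (by linarith [abs_nonneg w.arg]) harg
    rw [sq_abs] at h1 h2
    linarith
  rw [Complex.cpow_def_of_ne_zero (norm_pos_iff.1 hw0), Complex.norm_exp]
  apply Real.exp_le_exp.2
  calc (Complex.log w * t).re ≤ ‖Complex.log w * t‖ := Complex.re_le_norm _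
    _ = ‖t‖ * ‖Complex.log w‖ := by rw [norm_mul, mul_comm]
    _ ≤ _ := by gcongr
end

section
/- For every real number r with 0 ≤ r < 1 and every integer n ≥ 1, Σ_{1 ≤ i₁ < i₂ < ⋯ < i_n} r^{i₁ + i₂ + ⋯ + i_n} = r^{n(n+1)/2} / ∏_{i=1}^n (1 − r^i). -/
def stmt9Equiv (n : ℕ) :
    (ℕ × {f : Fin n → ℕ // StrictMono f ∧ ∀ j, 1 ≤ f j}) ≃
      {f : Fin (n + 1) → ℕ // StrictMono f ∧ ∀ j, 1 ≤ f j} where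
  toFun p := ⟨Fin.cons (p.1 + 1) (fun j => p.2.1 j + (p.1 + 1)), by
    obtain ⟨k, g, hg, hg1⟩ := p
    constructor
    · intro a b hab
      induction a using Fin.cases with
      | zero =>
        induction b using Fin.cases with
        | zero => exact absurd hab (lt_irrefl _)
        | succ b => have := hg1 b; simp only [Fin.cons_zero, Fin.cons_succ]; omega
      | succ a =>
        induction b using Fin.cases with
        | zero => exact absurd hab (Fin.not_lt_zero _)
        | succ b =>
          have := hg (Fin.succ_lt_succ_iff.mp hab)
          simp only [Fin.cons_succ]; omega
    · intro j
      induction j using Fin.cases with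
      | zero => simp
      | succ b => simp only [Fin.cons_succ]; omega⟩
  invFun f := (f.1 0 - 1, ⟨fun j => f.1 j.succ - f.1 0, by
    obtain ⟨f, hf, hf1⟩ := f
    constructor
    · intro a b hab
      have h1 := hf (Fin.succ_lt_succ_iff.mpr hab)
      have h2 := hf (Fin.succ_pos a)
      simp only; omega
    · intro j
      have h2 := hf (Fin.succ_pos j)
      simp only; omega⟩)
  left_inv p := by
    obtain ⟨k, g, hg, hg1⟩ := p
    simp
  right_inv f := by
    obtain ⟨f, hf, hf1⟩ := f
    apply Subtype.ext
    funext j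
    have h0 := hf1 0
    induction j using Fin.cases with
    | zero => simp only [Fin.cons_zero]; omega
    | succ b =>
      have h2 := hf (Fin.succ_pos b)
      simp only [Fin.cons_succ]; omega

theorem stmt9_hasSum (r : ℝ) (hr0 : 0 ≤ r) (hr1 : r < 1) (n : ℕ) :
    HasSum (fun f : {f : Fin n → ℕ // StrictMono f ∧ ∀ j, 1 ≤ f j} => r ^ (∑ j, f.1 j))
      (r ^ (n * (n + 1) / 2) / ∏ i ∈ Finset.range n, (1 - r ^ (i + 1))) := by
  induction n with
  | zero =>
    let x : {f : Fin 0 → ℕ // StrictMono f ∧ ∀ j, 1 ≤ f j} :=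
      ⟨Fin.elim0, fun a => a.elim0, fun a => a.elim0⟩
    have h := hasSum_single (f := fun f : {f : Fin 0 → ℕ // StrictMono f ∧ ∀ j, 1 ≤ f j} =>
      r ^ (∑ j, f.1 j)) x (fun y hy => absurd (Subtype.ext (Subsingleton.elim _ _)) hy)
    simpa using h
  | succ n ih =>
    rw [← (stmt9Equiv n).hasSum_iff]
    have hq0 : 0 ≤ r ^ (n + 1) := by positivity
    have hq1 : r ^ (n + 1) < 1 := pow_lt_one₀ hr0 hr1 (by omega)
    have hg := (hasSum_geometric_of_lt_one hq0 hq1).mul_left (r ^ (n + 1))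
    have hs := hg.summable.mul_of_nonneg ih.summable
      (fun k => by simp only [Pi.zero_apply]; positivity)
      (fun k => by simp only [Pi.zero_apply]; positivity)
    have h := hg.mul ih hs
    convert h using 1
    · rfl
    · funext p
      obtain ⟨k, g, hg, hg1⟩ := p
      simp only [Function.comp, stmt9Equiv, Equiv.coe_fn_mk, Fin.sum_univ_succ, Fin.cons_zero,
        Fin.cons_succ, Finset.sum_add_distrib, Finset.sum_const, Finset.card_univ,
        Fintype.card_fin, smul_eq_mul]
      rw [← pow_mul, ← pow_add, ← pow_add]
      congr 1
      ring
    · have he : (n + 1) * (n + 1 + 1) / 2 = n * (n + 1) / 2 + (n + 1) := by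
        rw [show (n + 1) * (n + 1 + 1) = n * (n + 1) + (n + 1) * 2 by ring,
          Nat.add_mul_div_right _ _ (by norm_num)]
      rw [he, Finset.prod_range_succ, pow_add, div_eq_mul_inv, div_eq_mul_inv, mul_inv]
      ring

theorem stmt9 (r : ℝ) (hr0 : 0 ≤ r) (hr1 : r < 1) (n : ℕ) (hn : 1 ≤ n) :
    ∑' f : {f : Fin n → ℕ // StrictMono f ∧ ∀ j, 1 ≤ f j}, r ^ (∑ j, f.1 j) =
      r ^ (n * (n + 1) / 2) / ∏ i ∈ Finset.range n, (1 - r ^ (i + 1)) :=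
  (stmt9_hasSum r hr0 hr1 n).tsum_eq
end

section
/- Suppose f : (0,1) → ℝ is not identically zero, K ≥ 0 satisfies |f(x) − f(y)| ≤ K·h(x, y) for all x, y ∈ (0,1), and λ ∈ ℝ with λ ≠ 1 satisfies Σ_{i=1}^k p_i f(φ̃_{A_i}(x)) = λ·f(x) for every x ∈ (0,1). Then |λ| ≤ τ(𝒜, p). -/
/-- The projective action `φ̃_A` of `A = (a, b; c, d)` in coordinates on `(0,1)`. -/
noncomputable def phiM (M : Matrix (Fin 2) (Fin 2) ℝ) (x : ℝ) : ℝ :=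
  ((M 0 0 - M 0 1) * x + M 0 1) / ((M 0 0 + M 1 0 - M 0 1 - M 1 1) * x + M 0 1 + M 1 1)

/-- `ψ(A) = min{ad/(bc), bc/(ad)}`. -/
noncomputable def psiM (M : Matrix (Fin 2) (Fin 2) ℝ) : ℝ :=
  min (M 0 0 * M 1 1 / (M 0 1 * M 1 0)) (M 0 1 * M 1 0 / (M 0 0 * M 1 1))

/-- The Birkhoff contraction coefficient `τ(A) = (1 − √ψ(A))/(1 + √ψ(A))`. -/
noncomputable def tauM (M : Matrix (Fin 2) (Fin 2) ℝ) : ℝ :=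
  (1 - Real.sqrt (psiM M)) / (1 + Real.sqrt (psiM M))

/-- The Hilbert projective metric in coordinates on `(0,1)`. -/
noncomputable def hilbMetric (x y : ℝ) : ℝ :=
  |Real.log (x * (1 - y) / (y * (1 - x)))|

theorem tau_aux (M : Matrix (Fin 2) (Fin 2) ℝ) (ha : 0 < M 0 0) (hb : 0 < M 0 1)
    (hc : 0 < M 1 0) (hd : 0 < M 1 1) : ∃ P Q : ℝ, 0 < P ∧ 0 < Q ∧ P ^ 2 = M 0 0 * M 1 1 ∧
      Q ^ 2 = M 0 1 * M 1 0 ∧ tauM M = |P - Q| / (P + Q) := by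
  have h1 : 0 < M 0 0 * M 1 1 := mul_pos ha hd
  have h2 : 0 < M 0 1 * M 1 0 := mul_pos hb hc
  obtain ⟨P, hP, hP2⟩ : ∃ P : ℝ, 0 < P ∧ P ^ 2 = M 0 0 * M 1 1 :=
    ⟨_, Real.sqrt_pos.2 h1, Real.sq_sqrt h1.le⟩
  obtain ⟨Q, hQ, hQ2⟩ : ∃ P : ℝ, 0 < P ∧ P ^ 2 = M 0 1 * M 1 0 :=
    ⟨_, Real.sqrt_pos.2 h2, Real.sq_sqrt h2.le⟩
  refine ⟨P, Q, hP, hQ, hP2, hQ2, ?_⟩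
  unfold tauM psiM
  rw [← hP2, ← hQ2, ← div_pow, ← div_pow]
  rcases le_total P Q with h | h
  · have e1 : P / Q ≤ 1 := (div_le_one hQ).2 h
    have e2 : 1 ≤ Q / P := (one_le_div hP).2 h
    have e3 : (P / Q) ^ 2 ≤ (Q / P) ^ 2 := by
      have : 0 ≤ P / Q := by positivity
      gcongr
    rw [min_eq_left e3, Real.sqrt_sq (by positivity), abs_of_nonpos (by linarith)]
    field_simp
    ring
  · have e1 : Q / P ≤ 1 := (div_le_one hP).2 h
    have e2 : 1 ≤ P / Q := (one_le_div hQ).2 h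
    have e3 : (Q / P) ^ 2 ≤ (P / Q) ^ 2 := by
      have : 0 ≤ Q / P := by positivity
      gcongr
    rw [min_eq_right e3, Real.sqrt_sq (by positivity), abs_of_nonneg (by linarith)]
    field_simp

theorem tau_bound (a b c d P Q u : ℝ) (ha : 0 < a) (hb : 0 < b) (hc : 0 < c) (hd : 0 < d)
    (hu : 0 < u) (hP : 0 < P) (hQ : 0 < Q) (h1 : P ^ 2 = a * d) (h2 : Q ^ 2 = b * c) :
    |a * u / (a * u + b) - c * u / (c * u + d)| ≤ |P - Q| / (P + Q) := by
  have e : a * u / (a * u + b) - c * u / (c * u + d)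
      = (P - Q) * ((P + Q) * u) / ((a * u + b) * (c * u + d)) := by
    have : (P - Q) * ((P + Q) * u) = (a * d - b * c) * u := by rw [← h1, ← h2]; ring
    rw [this]
    field_simp
    ring
  have hs : 0 < P + Q := by linarith
  rw [e, abs_div, abs_mul, abs_of_pos (by positivity : 0 < (P + Q) * u),
    abs_of_pos (by positivity : 0 < (a * u + b) * (c * u + d)), div_le_div_iff₀ (by positivity) hs,
    mul_assoc]
  apply mul_le_mul_of_nonneg_left _ (abs_nonneg _)
  have h3 : 2 * (P * Q) * u ≤ a * c * u ^ 2 + b * d := by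
    apply abs_le_of_sq_le_sq' _ (by positivity) |>.2
    have : (2 * (P * Q) * u) ^ 2 = 4 * (a * c * u ^ 2) * (b * d) := by
      calc _ = 4 * (P ^ 2) * (Q ^ 2) * u ^ 2 := by ring
        _ = _ := by rw [h1, h2]; ring
    rw [this]
    nlinarith [sq_nonneg (a * c * u ^ 2 - b * d)]
  nlinarith

theorem hilb_eq (x y : ℝ) (hx : x ∈ Set.Ioo (0 : ℝ) 1) (hy : y ∈ Set.Ioo (0 : ℝ) 1) :
    hilbMetric x y = |Real.log (x / (1 - x)) - Real.log (y / (1 - y))| := by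
  have h1 : 0 < 1 - x := by linarith [hx.2]
  have h2 : 0 < 1 - y := by linarith [hy.2]
  have h3 := hx.1
  have h4 := hy.1
  unfold hilbMetric
  rw [← Real.log_div (by positivity) (by positivity)]
  congr 2
  field_simp

theorem phi_aux (M : Matrix (Fin 2) (Fin 2) ℝ) (hM : ∀ s t, 0 < M s t) (x : ℝ)
    (hx : x ∈ Set.Ioo (0 : ℝ) 1) : phiM M x ∈ Set.Ioo (0 : ℝ) 1 ∧
      Real.log (phiM M x / (1 - phiM M x)) =
        Real.log (M 0 0 * Real.exp (Real.log (x / (1 - x))) + M 0 1)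
        - Real.log (M 1 0 * Real.exp (Real.log (x / (1 - x))) + M 1 1) := by
  have ha := hM 0 0
  have hb := hM 0 1
  have hc := hM 1 0
  have hd := hM 1 1
  have h1 : 0 < 1 - x := by linarith [hx.2]
  have h3 := hx.1
  have hn : 0 < M 0 0 * x + M 0 1 * (1 - x) := by positivity
  have hm : 0 < M 1 0 * x + M 1 1 * (1 - x) := by positivity
  have e : phiM M x = (M 0 0 * x + M 0 1 * (1 - x)) /
      ((M 0 0 * x + M 0 1 * (1 - x)) + (M 1 0 * x + M 1 1 * (1 - x))) := by
    unfold phiM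
    congr 1 <;> ring
  have e' : 1 - phiM M x = (M 1 0 * x + M 1 1 * (1 - x)) /
      ((M 0 0 * x + M 0 1 * (1 - x)) + (M 1 0 * x + M 1 1 * (1 - x))) := by
    rw [e]
    rw [eq_div_iff (by positivity), sub_mul, div_mul_cancel₀ _ (by positivity)]
    ring
  have p1 : 0 < phiM M x := by rw [e]; positivity
  have p2 : 0 < 1 - phiM M x := by rw [e']; positivity
  refine ⟨⟨p1, by linarith⟩, ?_⟩
  rw [Real.exp_log (by positivity), ← Real.log_div (by positivity) (by positivity), e', e,
    div_div_div_cancel_right₀ (by positivity)]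
  congr 1
  have q1 : M 0 0 * (x / (1 - x)) + M 0 1 = (M 0 0 * x + M 0 1 * (1 - x)) / (1 - x) := by
    field_simp
  have q2 : M 1 0 * (x / (1 - x)) + M 1 1 = (M 1 0 * x + M 1 1 * (1 - x)) / (1 - x) := by
    field_simp
  rw [q1, q2, div_div_div_cancel_right₀ h1.ne']

theorem birkhoff (M : Matrix (Fin 2) (Fin 2) ℝ) (hM : ∀ s t, 0 < M s t) (x y : ℝ)
    (hx : x ∈ Set.Ioo (0 : ℝ) 1) (hy : y ∈ Set.Ioo (0 : ℝ) 1) :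
    hilbMetric (phiM M x) (phiM M y) ≤ tauM M * hilbMetric x y := by
  obtain ⟨P, Q, hP, hQ, h1, h2, h3⟩ := tau_aux M (hM 0 0) (hM 0 1) (hM 1 0) (hM 1 1)
  have ha := hM 0 0
  have hb := hM 0 1
  have hc := hM 1 0
  have hd := hM 1 1
  rw [hilb_eq _ _ (phi_aux M hM x hx).1 (phi_aux M hM y hy).1, hilb_eq x y hx hy,
    (phi_aux M hM x hx).2, (phi_aux M hM y hy).2]
  have key := Convex.norm_image_sub_le_of_norm_hasDerivWithin_le (s := Set.univ)
    (C := tauM M) (f := fun t : ℝ => Real.log (M 0 0 * Real.exp t + M 0 1)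
        - Real.log (M 1 0 * Real.exp t + M 1 1))
    (f' := fun t : ℝ => M 0 0 * Real.exp t / (M 0 0 * Real.exp t + M 0 1)
        - M 1 0 * Real.exp t / (M 1 0 * Real.exp t + M 1 1))
    (x := Real.log (y / (1 - y))) (y := Real.log (x / (1 - x)))
    (by
      intro t _
      have ht := Real.exp_pos t
      apply HasDerivAt.hasDerivWithinAt
      apply HasDerivAt.sub
      · exact (((Real.hasDerivAt_exp t).const_mul _).add_const _).log (by positivity)
      · exact (((Real.hasDerivAt_exp t).const_mul _).add_const _).log (by positivity))
    (by
      intro t _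
      rw [h3, Real.norm_eq_abs]
      exact tau_bound _ _ _ _ _ _ _ ha hb hc hd (Real.exp_pos t) hP hQ h1 h2)
    convex_univ (Set.mem_univ _) (Set.mem_univ _)
  simpa only [Real.norm_eq_abs] using key

theorem tau_nonneg' (M : Matrix (Fin 2) (Fin 2) ℝ) (hM : ∀ s t, 0 < M s t) : 0 ≤ tauM M := by
  obtain ⟨P, Q, hP, hQ, h1, h2, h3⟩ := tau_aux M (hM 0 0) (hM 0 1) (hM 1 0) (hM 1 1)
  rw [h3]
  positivity

theorem stmt12 {k : ℕ} (hk : 1 ≤ k) (A : Fin k → Matrix (Fin 2) (Fin 2) ℝ)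
    (hpos : ∀ i s t, 0 < A i s t) (hinv : ∀ i, IsUnit (A i))
    (p : Fin k → ℝ) (hp : ∀ i, 0 ≤ p i) (hps : ∑ i, p i = 1)
    (f : ℝ → ℝ) (hne : ∃ x ∈ Set.Ioo (0 : ℝ) 1, f x ≠ 0)
    (K : ℝ) (hK : 0 ≤ K)
    (hlip : ∀ x ∈ Set.Ioo (0 : ℝ) 1, ∀ y ∈ Set.Ioo (0 : ℝ) 1,
      |f x - f y| ≤ K * hilbMetric x y)
    (lam : ℝ) (hlam : lam ≠ 1)
    (heig : ∀ x ∈ Set.Ioo (0 : ℝ) 1, ∑ i, p i * f (phiM (A i) x) = lam * f x) :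
    |lam| ≤ ∑ i, p i * tauM (A i) := by
  have hτ : ∀ i, 0 ≤ tauM (A i) := fun i => tau_nonneg' _ (hpos i)
  set T := ∑ i, p i * tauM (A i) with hT
  have hT0 : 0 ≤ T := Finset.sum_nonneg fun i _ => mul_nonneg (hp i) (hτ i)
  have main : ∀ n : ℕ, ∀ x ∈ Set.Ioo (0 : ℝ) 1, ∀ y ∈ Set.Ioo (0 : ℝ) 1,
      |lam| ^ n * |f x - f y| ≤ K * T ^ n * hilbMetric x y := by
    intro n
    induction n with
    | zero => simpa using hlip
    | succ n ih =>
      intro x hx y hy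
      have e : lam * (f x - f y) = ∑ i, p i * (f (phiM (A i) x) - f (phiM (A i) y)) := by
        rw [mul_sub, ← heig x hx, ← heig y hy, ← Finset.sum_sub_distrib]
        exact Finset.sum_congr rfl fun i _ => by ring
      calc |lam| ^ (n + 1) * |f x - f y| = |lam| ^ n * |lam * (f x - f y)| := by
            rw [abs_mul]; ring
        _ ≤ |lam| ^ n * ∑ i, p i * |f (phiM (A i) x) - f (phiM (A i) y)| := by
            rw [e]
            apply mul_le_mul_of_nonneg_left _ (by positivity)
            refine (Finset.abs_sum_le_sum_abs _ _).trans (le_of_eq ?_)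
            exact Finset.sum_congr rfl fun i _ => by rw [abs_mul, abs_of_nonneg (hp i)]
        _ = ∑ i, p i * (|lam| ^ n * |f (phiM (A i) x) - f (phiM (A i) y)|) := by
            rw [Finset.mul_sum]
            exact Finset.sum_congr rfl fun i _ => by ring
        _ ≤ ∑ i, p i * (K * T ^ n * (tauM (A i) * hilbMetric x y)) := by
            apply Finset.sum_le_sum
            intro i _
            apply mul_le_mul_of_nonneg_left _ (hp i)
            refine (ih _ (phi_aux _ (hpos i) x hx).1 _ (phi_aux _ (hpos i) y hy).1).trans ?_
            exact mul_le_mul_of_nonneg_left (birkhoff _ (hpos i) x y hx hy) (by positivity)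
        _ = K * T ^ n * hilbMetric x y * T := by
            conv_rhs => rw [hT]
            rw [Finset.mul_sum]
            exact Finset.sum_congr rfl fun i _ => by ring
        _ = K * T ^ (n + 1) * hilbMetric x y := by ring
  by_contra! hlt
  have hl : 0 < |lam| := hT0.trans_lt hlt
  have hconst : ∀ x ∈ Set.Ioo (0 : ℝ) 1, ∀ y ∈ Set.Ioo (0 : ℝ) 1, f x = f y := by
    intro x hx y hy
    have hb : ∀ n : ℕ, |f x - f y| ≤ K * hilbMetric x y * (T / |lam|) ^ n := by
      intro n
      have := main n x hx y hy
      rw [div_pow, mul_div_assoc', le_div_iff₀ (by positivity)]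
      linarith
    have ht := (tendsto_pow_atTop_nhds_zero_of_lt_one (div_nonneg hT0 hl.le)
      ((div_lt_one hl).2 hlt)).const_mul (K * hilbMetric x y)
    rw [mul_zero] at ht
    have := ge_of_tendsto' ht hb
    exact sub_eq_zero.1 (abs_eq_zero.1 (le_antisymm this (abs_nonneg _)))
  obtain ⟨x, hx, hfx⟩ := hne
  apply hlam
  have h := heig x hx
  have h' : ∑ i, p i * f (phiM (A i) x) = f x := by
    rw [Finset.sum_congr rfl fun i _ => by
      rw [hconst _ (phi_aux _ (hpos i) x hx).1 x hx], ← Finset.sum_mul, hps, one_mul]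
  rw [h'] at h
  exact mul_right_cancel₀ hfx (by linarith)
end

section
/- Let f : ℂ → ℂ be holomorphic (complex differentiable) on D and suppose that f(z) = Σ_{i=1}^k p_i f(φ_{A_i}(z)) for every z ∈ D. Then f is constant on D. -/
open Complex

/-- The complex projective action `φ_A` of a positive 2×2 matrix `A` on the disc `D`. -/
noncomputable def phiMC (M : Matrix (Fin 2) (Fin 2) ℝ) (z : ℂ) : ℂ :=
  (((M 0 0 : ℂ) - M 0 1) * z + (M 0 1 : ℂ)) /
    (((M 0 0 : ℂ) + M 1 0 - M 0 1 - M 1 1) * z + (M 0 1 : ℂ) + M 1 1)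

theorem phi_aux_s16 (a b c d : ℝ) (ha : 0 < a) (hb : 0 < b) (hc : 0 < c) (hd : 0 < d) (z : ℂ)
    (hz : z ∈ Metric.closedBall ((1 : ℂ) / 2) (1 / 2)) :
    ‖((a : ℂ) - c) * z + (b - d) * (1 - z)‖ < ‖((a : ℂ) + c - b - d) * z + b + d‖ := by
  rw [Metric.mem_closedBall, dist_eq_norm] at hz
  have h2 : ‖z - 1 / 2‖ ^ 2 ≤ (1 / 2) ^ 2 := by gcongr
  rw [← sq_lt_sq₀ (norm_nonneg _) (norm_nonneg _)]
  rw [← Complex.normSq_eq_norm_sq] at h2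
  rw [← Complex.normSq_eq_norm_sq, ← Complex.normSq_eq_norm_sq]
  obtain ⟨x, y⟩ := z
  simp [Complex.normSq_apply] at h2 ⊢
  have h3 : 0 ≤ x * (1 - x) - y * y := by nlinarith
  have h4 : 0 ≤ (a * d + b * c) * (x * (1 - x) - y * y) := mul_nonneg (by positivity) h3
  have h5 : 0 < a * c * (x * x + y * y) + b * d * ((1 - x) * (1 - x) + y * y) := by
    rcases eq_or_ne x 0 with h | h
    · subst h
      have := mul_pos hb hd
      have := mul_pos ha hc
      have : 0 ≤ a * c * (y * y) := mul_nonneg (by positivity) (mul_self_nonneg y)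
      have : 0 ≤ b * d * (y * y) := mul_nonneg (by positivity) (mul_self_nonneg y)
      nlinarith
    · have : 0 < a * c * (x ^ 2 + y ^ 2) := by positivity
      have : 0 ≤ b * d * ((1 - x) ^ 2 + y ^ 2) := by positivity
      nlinarith
  nlinarith

theorem phi_den (M : Matrix (Fin 2) (Fin 2) ℝ) (h : ∀ s t, 0 < M s t) (z : ℂ)
    (hz : z ∈ Metric.closedBall ((1 : ℂ) / 2) (1 / 2)) :
    ((M 0 0 : ℂ) + M 1 0 - M 0 1 - M 1 1) * z + (M 0 1 : ℂ) + M 1 1 ≠ 0 := by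
  have := phi_aux_s16 _ _ _ _ (h 0 0) (h 0 1) (h 1 0) (h 1 1) z hz
  exact norm_pos_iff.mp ((norm_nonneg _).trans_lt this)

theorem phi_mem (M : Matrix (Fin 2) (Fin 2) ℝ) (h : ∀ s t, 0 < M s t) (z : ℂ)
    (hz : z ∈ Metric.closedBall ((1 : ℂ) / 2) (1 / 2)) :
    phiMC M z ∈ Metric.ball ((1 : ℂ) / 2) (1 / 2) := by
  have h1 := phi_aux_s16 _ _ _ _ (h 0 0) (h 0 1) (h 1 0) (h 1 1) z hz
  have h0 := phi_den M h z hz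
  have e : phiMC M z - 1 / 2 = (((M 0 0 : ℂ) - M 1 0) * z + (M 0 1 - M 1 1) * (1 - z)) /
      (((M 0 0 : ℂ) + M 1 0 - M 0 1 - M 1 1) * z + (M 0 1 : ℂ) + M 1 1) / 2 := by
    unfold phiMC
    rw [div_sub_div _ _ h0 two_ne_zero, div_div]
    congr 1
    ring
  rw [Metric.mem_ball, dist_eq_norm, e, norm_div, norm_div]
  have h2 := norm_pos_iff.mpr h0
  have := (div_lt_one h2).mpr h1
  rw [Complex.norm_ofNat]
  linarith

theorem phi_cont (M : Matrix (Fin 2) (Fin 2) ℝ) (h : ∀ s t, 0 < M s t) :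
    ContinuousOn (phiMC M) (Metric.closedBall ((1 : ℂ) / 2) (1 / 2)) := by
  unfold phiMC
  exact ContinuousOn.div (by fun_prop) (by fun_prop) (fun z hz => phi_den M h z hz)

theorem stmt16 {k : ℕ} (hk : 1 ≤ k) (A : Fin k → Matrix (Fin 2) (Fin 2) ℝ)
    (hpos : ∀ i s t, 0 < A i s t) (hinv : ∀ i, IsUnit (A i))
    (p : Fin k → ℝ) (hp : ∀ i, 0 ≤ p i) (hps : ∑ i, p i = 1)
    (f : ℂ → ℂ) (hf : DifferentiableOn ℂ f (Metric.ball ((1 : ℂ) / 2) (1 / 2)))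
    (heq : ∀ z ∈ Metric.ball ((1 : ℂ) / 2) (1 / 2),
      f z = ∑ i, (p i : ℂ) * f (phiMC (A i) z)) :
    ∀ z ∈ Metric.ball ((1 : ℂ) / 2) (1 / 2),
      ∀ w ∈ Metric.ball ((1 : ℂ) / 2) (1 / 2), f z = f w := by
  have hsub : Metric.ball ((1 : ℂ) / 2) (1 / 2) ⊆ Metric.closedBall ((1 : ℂ) / 2) (1 / 2) :=
    Metric.ball_subset_closedBall
  let K : Set ℂ := ⋃ i, phiMC (A i) '' Metric.closedBall ((1 : ℂ) / 2) (1 / 2)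
  have hKc : IsCompact K := isCompact_iUnion fun i =>
    (isCompact_closedBall _ _).image_of_continuousOn (phi_cont (A i) (hpos i))
  have hKD : K ⊆ Metric.ball ((1 : ℂ) / 2) (1 / 2) := by
    refine Set.iUnion_subset fun i => ?_
    rintro _ ⟨z, hz, rfl⟩
    exact phi_mem (A i) (hpos i) z hz
  have hKn : K.Nonempty := ⟨phiMC (A ⟨0, hk⟩) (1 / 2), Set.mem_iUnion.mpr
    ⟨⟨0, hk⟩, Set.mem_image_of_mem _ (Metric.mem_closedBall_self (by norm_num))⟩⟩
  obtain ⟨z0, hz0, hmax⟩ := hKc.exists_isMaxOn hKn (hf.continuousOn.mono hKD).norm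
  have hm : IsMaxOn (norm ∘ f) (Metric.ball ((1 : ℂ) / 2) (1 / 2)) z0 := by
    intro z hz
    show ‖f z‖ ≤ ‖f z0‖
    rw [heq z hz]
    calc ‖∑ i, (p i : ℂ) * f (phiMC (A i) z)‖
        ≤ ∑ i, ‖(p i : ℂ) * f (phiMC (A i) z)‖ := norm_sum_le _ _
      _ ≤ ∑ i, p i * ‖f z0‖ := by
          refine Finset.sum_le_sum fun i _ => ?_
          rw [norm_mul, Complex.norm_of_nonneg (hp i)]
          exact mul_le_mul_of_nonneg_left
            (hmax (Set.mem_iUnion.mpr ⟨i, Set.mem_image_of_mem _ (hsub hz)⟩)) (hp i)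
      _ = ‖f z0‖ := by rw [← Finset.sum_mul, hps, one_mul]
  have hc := Complex.eqOn_of_isPreconnected_of_isMaxOn_norm
    (convex_ball ((1 : ℂ) / 2) (1 / 2)).isPreconnected Metric.isOpen_ball hf (hKD hz0) hm
  intro z hz w hw
  exact (hc hz).trans (hc hw).symm
end

section
/- There is no function f : ℂ → ℂ, holomorphic (complex differentiable) on D, such that Σ_{i=1}^k p_i f(φ_{A_i}(z)) = 1 + f(z) for every z ∈ D. -/
open Complex

/-- Real version of the action. -/
noncomputable def phiRe (M : Matrix (Fin 2) (Fin 2) ℝ) (x : ℝ) : ℝ :=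
  ((M 0 0 - M 0 1) * x + M 0 1) / ((M 0 0 + M 1 0 - M 0 1 - M 1 1) * x + M 0 1 + M 1 1)

lemma phiMC_ofReal (M : Matrix (Fin 2) (Fin 2) ℝ) (x : ℝ) :
    phiMC M (x : ℂ) = ((phiRe M x : ℝ) : ℂ) := by
  simp [phiMC, phiRe]

lemma num_pos {a b x : ℝ} (ha : 0 < a) (hb : 0 < b) (hx : x ∈ Set.Icc (0 : ℝ) 1) :
    0 < (a - b) * x + b := by
  obtain ⟨h0, h1⟩ := hx
  rcases h0.eq_or_lt with h | h
  · rw [← h]; linarith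
  · nlinarith [mul_pos ha h, mul_nonneg hb.le (sub_nonneg.2 h1)]

lemma den_pos (M : Matrix (Fin 2) (Fin 2) ℝ) (hM : ∀ s t, 0 < M s t) {x : ℝ}
    (hx : x ∈ Set.Icc (0 : ℝ) 1) :
    0 < (M 0 0 + M 1 0 - M 0 1 - M 1 1) * x + M 0 1 + M 1 1 := by
  have h1 := num_pos (hM 0 0) (hM 0 1) hx
  have h2 := num_pos (hM 1 0) (hM 1 1) hx
  linarith

lemma phiRe_mem (M : Matrix (Fin 2) (Fin 2) ℝ) (hM : ∀ s t, 0 < M s t) {x : ℝ}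
    (hx : x ∈ Set.Icc (0 : ℝ) 1) : phiRe M x ∈ Set.Ioo (0 : ℝ) 1 := by
  have h1 := num_pos (hM 0 0) (hM 0 1) hx
  have h2 := num_pos (hM 1 0) (hM 1 1) hx
  have h3 := den_pos M hM hx
  refine ⟨div_pos h1 h3, (div_lt_one h3).2 (by linarith)⟩

lemma phiRe_cont (M : Matrix (Fin 2) (Fin 2) ℝ) (hM : ∀ s t, 0 < M s t) :
    ContinuousOn (phiRe M) (Set.Icc 0 1) := by
  unfold phiRe
  refine ContinuousOn.div (by fun_prop) (by fun_prop) ?_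
  intro x hx
  exact (den_pos M hM hx).ne'

lemma mem_disc {x : ℝ} (hx : x ∈ Set.Ioo (0 : ℝ) 1) :
    (x : ℂ) ∈ Metric.ball ((1 : ℂ) / 2) (1 / 2) := by
  have : (x : ℂ) - 1 / 2 = ((x - 1 / 2 : ℝ) : ℂ) := by push_cast; ring
  rw [Metric.mem_ball, dist_eq_norm, this, Complex.norm_real, Real.norm_eq_abs, abs_lt]
  constructor <;> linarith [hx.1, hx.2]

theorem stmt17 {k : ℕ} (hk : 1 ≤ k) (A : Fin k → Matrix (Fin 2) (Fin 2) ℝ)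
    (hpos : ∀ i s t, 0 < A i s t) (hinv : ∀ i, IsUnit (A i))
    (p : Fin k → ℝ) (hp : ∀ i, 0 ≤ p i) (hps : ∑ i, p i = 1) :
    ¬ ∃ f : ℂ → ℂ, DifferentiableOn ℂ f (Metric.ball ((1 : ℂ) / 2) (1 / 2)) ∧
      ∀ z ∈ Metric.ball ((1 : ℂ) / 2) (1 / 2),
        ∑ i, (p i : ℂ) * f (phiMC (A i) z) = 1 + f z := by
  rintro ⟨f, hf, h⟩
  set K : Set ℝ := ⋃ i, phiRe (A i) '' Set.Icc 0 1 with hK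
  have hKc : IsCompact K :=
    isCompact_iUnion fun i => isCompact_Icc.image_of_continuousOn (phiRe_cont _ (hpos i))
  have hKs : K ⊆ Set.Ioo 0 1 := by
    intro y hy
    obtain ⟨i, x, hx, rfl⟩ := Set.mem_iUnion.1 hy
    exact phiRe_mem _ (hpos i) hx
  have hKm : ∀ i, ∀ x ∈ Set.Icc (0 : ℝ) 1, phiRe (A i) x ∈ K := fun i x hx =>
    Set.mem_iUnion.2 ⟨i, x, hx, rfl⟩
  have hne : K.Nonempty := ⟨_, hKm ⟨0, hk⟩ 0 (by simp)⟩
  have hc : ContinuousOn (fun x : ℝ => (f (x : ℂ)).re) K :=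
    Complex.continuous_re.comp_continuousOn
      (hf.continuousOn.comp Complex.continuous_ofReal.continuousOn
        (fun x hx => mem_disc (hKs hx)))
  obtain ⟨x, hx, hmax⟩ := hKc.exists_isMaxOn hne hc
  have hx1 : x ∈ Set.Icc (0 : ℝ) 1 := Set.Ioo_subset_Icc_self (hKs hx)
  have e := congrArg Complex.re (h x (mem_disc (hKs hx)))
  simp only [phiMC_ofReal, Complex.re_sum, Complex.re_ofReal_mul, Complex.add_re,
    Complex.one_re] at e
  have hle : ∑ i, p i * (f (phiRe (A i) x : ℂ)).re ≤ ∑ i, p i * (f (x : ℂ)).re :=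
    Finset.sum_le_sum fun i _ => mul_le_mul_of_nonneg_left (hmax (hKm i x hx1)) (hp i)
  rw [← Finset.sum_mul, hps] at hle
  linarith
end

section
/- For every integer n ≥ 1, if s₁ ≥ s₂ ≥ ⋯ are nonnegative reals with s_i ≤ C₀ r^i for all i ≥ 1, where C₀ ≥ 0 and 0 ≤ r < 1, then Σ_{1 ≤ i₁ < i₂ < ⋯ < i_n} s_{i₁} s_{i₂} ⋯ s_{i_n} ≤ C₀ⁿ · r^{n(n+1)/2} / ∏_{i=1}^n (1 − r^i). -/
theorem aux19 (r : ℝ) (hr0 : 0 ≤ r) (hr1 : r < 1) (n : ℕ) : ∀ (m : ℕ) (u : Finset (Fin n → ℕ)),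
    (∀ f ∈ u, StrictMono f ∧ ∀ j, m ≤ f j) →
    ∑ f ∈ u, ∏ j, r ^ (f j) ≤ r ^ (n * m + n.choose 2) / ∏ i ∈ Finset.range n, (1 - r ^ (i + 1)) := by
  classical
  induction n with
  | zero =>
    intro m u hu
    have h1 : u.card ≤ 1 := by
      apply Finset.card_le_one_of_subsingleton
    simp
    exact h1
  | succ n ih =>
    intro m u hu
    have hP : 0 < ∏ i ∈ Finset.range n, (1 - r ^ (i + 1)) := by
      apply Finset.prod_pos
      intro i _
      have := pow_lt_one₀ hr0 hr1 (Nat.succ_ne_zero i)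
      simpa using this
    have hq : r ^ (n + 1) < 1 := pow_lt_one₀ hr0 hr1 (Nat.succ_ne_zero n)
    rw [← Finset.sum_fiberwise_of_maps_to (g := fun f => f 0) (t := u.image (fun f => f 0))
      (fun f hf => Finset.mem_image_of_mem _ hf)]
    have inner : ∀ a ∈ u.image (fun f => f 0),
        ∑ f ∈ u with f 0 = a, ∏ j, r ^ (f j) ≤
          (r ^ (n + 1)) ^ a * (r ^ (n + n.choose 2) / ∏ i ∈ Finset.range n, (1 - r ^ (i + 1))) := by
      intro a _
      have e1 : ∑ f ∈ u with f 0 = a, ∏ j, r ^ (f j) =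
          r ^ a * ∑ g ∈ (u.filter (fun f => f 0 = a)).image Fin.tail, ∏ j, r ^ (g j) := by
        rw [Finset.sum_image, Finset.mul_sum]
        · apply Finset.sum_congr rfl
          intro f hf
          rw [Fin.prod_univ_succ, (Finset.mem_filter.1 hf).2]
          rfl
        · intro f hf g hg h
          have hf' := (Finset.mem_filter.1 hf).2
          have hg' := (Finset.mem_filter.1 hg).2
          rw [← Fin.cons_self_tail f, ← Fin.cons_self_tail g, h, hf', hg']
      rw [e1]
      have h2 := ih (a + 1) ((u.filter (fun f => f 0 = a)).image Fin.tail) (by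
        intro g hg
        obtain ⟨f, hf, rfl⟩ := Finset.mem_image.1 hg
        obtain ⟨hfu, hfa⟩ := Finset.mem_filter.1 hf
        obtain ⟨hs, -⟩ := hu f hfu
        refine ⟨fun i j hij => hs (Fin.succ_lt_succ_iff.2 hij), fun j => ?_⟩
        have := hs (Fin.succ_pos j)
        rw [hfa] at this
        exact this)
      refine (mul_le_mul_of_nonneg_left h2 (pow_nonneg hr0 a)).trans (le_of_eq ?_)
      ring
    refine (Finset.sum_le_sum inner).trans ?_
    rw [← Finset.sum_mul]
    have hg : ∑ a ∈ u.image (fun f => f 0), (r ^ (n + 1)) ^ a ≤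
        (r ^ (n + 1)) ^ m / (1 - r ^ (n + 1)) := by
      refine le_trans (Finset.sum_le_sum_of_subset_of_nonneg
        (t := Finset.Ico m ((u.image (fun f => f 0)).sup id + 1)) ?_ ?_)
        (geom_sum_Ico_le_of_lt_one (pow_nonneg hr0 _) hq)
      · intro a ha
        have h3 : a ≤ (u.image (fun f => f 0)).sup id := Finset.le_sup (f := id) ha
        obtain ⟨f, hf, rfl⟩ := Finset.mem_image.1 ha
        exact Finset.mem_Ico.2 ⟨(hu f hf).2 0, Nat.lt_succ_of_le h3⟩
      · intros
        positivity
    refine (mul_le_mul_of_nonneg_right hg (by positivity)).trans (le_of_eq ?_)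
    rw [Finset.prod_range_succ, Nat.choose_succ_succ' n 1, Nat.choose_one_right]
    rw [div_mul_div_comm, mul_comm (1 - r ^ (n + 1)), ← pow_mul, ← pow_add]

theorem stmt19 (n : ℕ) (hn : 1 ≤ n) (s : ℕ → ℝ) (C₀ r : ℝ) (hC₀ : 0 ≤ C₀)
    (hr0 : 0 ≤ r) (hr1 : r < 1)
    (hmono : ∀ i, 1 ≤ i → s (i + 1) ≤ s i)
    (hnonneg : ∀ i, 1 ≤ i → 0 ≤ s i)
    (hbound : ∀ i, 1 ≤ i → s i ≤ C₀ * r ^ i) :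
    ∑' f : {f : Fin n → ℕ // StrictMono f ∧ ∀ j, 1 ≤ f j}, ∏ j, s (f.1 j) ≤
      C₀ ^ n * r ^ (n * (n + 1) / 2) / ∏ i ∈ Finset.range n, (1 - r ^ (i + 1)) := by
  classical
  apply Real.tsum_le_of_sum_le
  · intro f
    exact Finset.prod_nonneg fun j _ => hnonneg _ (f.2.2 j)
  · intro u
    have h1 : ∑ f ∈ u, ∏ j, s (f.1 j) ≤ C₀ ^ n * ∑ f ∈ u, ∏ j, r ^ (f.1 j) := by
      rw [Finset.mul_sum]
      apply Finset.sum_le_sum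
      intro f _
      refine (Finset.prod_le_prod (fun j _ => hnonneg _ (f.2.2 j))
        (fun j _ => hbound _ (f.2.2 j))).trans (le_of_eq ?_)
      rw [Finset.prod_mul_distrib]
      simp
    have h2 := aux19 r hr0 hr1 n 1 (u.map (Function.Embedding.subtype _)) (by
      intro f hf
      obtain ⟨g, _, rfl⟩ := Finset.mem_map.1 hf
      exact g.2)
    rw [Finset.sum_map] at h2
    have h3 : n * 1 + n.choose 2 = n * (n + 1) / 2 := by
      have h4 := Nat.choose_succ_succ' n 1
      rw [Nat.choose_one_right, Nat.choose_two_right] at h4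
      rw [mul_one, ← h4, Nat.add_sub_cancel, mul_comm]
    rw [h3] at h2
    rw [mul_div_assoc]
    exact h1.trans (mul_le_mul_of_nonneg_left h2 (pow_nonneg hC₀ n))
end
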